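/- arXiv:2303.12444 — 2 statements merged into one kernel-verified Lean document; each statement's English description precedes it below -/
import Mathlib

section
/- Let M be a finite set of items and let n ≥ 1 agents with equal entitlements have normalized monotone submodular valuations v_1, …, v_n : 2^M → ℝ≥0. Then there exists an allocation (A_1, …, A_n) of pairwise disjoint subsets of M such that for every agent i, v_i(A_i) ≥ (1/3) · MMS_n(v_i, M). -/
/-!
Scale every agent with positive maximin share so that this share equals `3`; the goal becomes a
bundle of value at least `1`. The claim is proved for a set `N` of agents, each of which has
at least `#N` disjoint bundles of value at least `3`, by induction on `#N`.

If an item `b` is worth at least `1` to an agent `i`, give `b` to `i`: each remaining agent loses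
at most the one bundle containing `b`, so induction applies (`exists_alloc`).

Otherwise all single items are worth less than `1` (`exists_alloc_of_small`). Take an assignment
of the items that maximizes the sum of the valuations truncated at `2`. If `w i (A i) < 1`,
moving an item to `i` never reaches the truncation level, so by submodularity the gains of `i`
summed over all items are at least `#N * (3 - 1)`. The losses of any other agent `k`, summed over
all items of `A k`, are at most the truncated value of `A k`, hence at most `2`; altogether the
losses are at most `2 * (#N - 1)`. Some single move then increases the sum: a contradiction.
-/

open Finset

/-- The maximin share of an agent with valuation `v` among `n` agents with equal
entitlements, on the set `M` of items: the supremum over all partitions of `M`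
into `n` pairwise disjoint bundles of the minimum value of a bundle. -/
noncomputable def MMS {ι : Type*} [DecidableEq ι] (n : ℕ) (v : Finset ι → ℝ)
    (M : Finset ι) : ℝ :=
  sSup {z : ℝ | ∃ B : Fin n → Finset ι,
    (∀ i j, i ≠ j → Disjoint (B i) (B j)) ∧
    (Finset.univ.biUnion B = M) ∧
    z = ⨅ i, v (B i)}

/-- `w`, restricted to the subsets of `M`, is a normalized monotone submodular valuation. -/
structure IsValuation {ι : Type*} [DecidableEq ι] (w : Finset ι → ℝ) (M : Finset ι) : Prop where
  empty : w ∅ = 0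
  mono : ∀ S T : Finset ι, S ⊆ T → T ⊆ M → w S ≤ w T
  submod : ∀ S T : Finset ι, S ⊆ M → T ⊆ M → w (S ∪ T) + w (S ∩ T) ≤ w S + w T

namespace IsValuation

variable {ι : Type*} [DecidableEq ι] {w : Finset ι → ℝ} {M : Finset ι}

lemma subset (h : IsValuation w M) {M' : Finset ι} (hM : M' ⊆ M) : IsValuation w M' :=
  ⟨h.empty, fun S T hS hT => h.mono S T hS (hT.trans hM),
    fun S T hS hT => h.submod S T (hS.trans hM) (hT.trans hM)⟩

lemma truncate (h : IsValuation w M) {c : ℝ} (hc : 0 ≤ c) :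
    IsValuation (fun S => min (w S) c) M := by
  refine ⟨by simp [h.empty, hc], fun S T hS hT => min_le_min_right _ (h.mono S T hS hT), ?_⟩
  intro S T hS hT
  have h1 := h.submod S T hS hT
  have h2 := h.mono _ _ (subset_union_left (s₁ := S) (s₂ := T)) (union_subset hS hT)
  have h3 := h.mono _ _ (subset_union_right (s₁ := S) (s₂ := T)) (union_subset hS hT)
  have h4 := h.mono _ _ (inter_subset_left (s₁ := S) (s₂ := T)) hS
  have h5 := h.mono _ _ (inter_subset_right (s₁ := S) (s₂ := T)) hT
  simp only [min_def]
  split_ifs <;> linarith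

/-- Adding `S` to `A` gains at most the sum of the gains of adding its items one by one to `A`. -/
lemma gain_le_sum (h : IsValuation w M) {A : Finset ι} (hA : A ⊆ M) (S : Finset ι) (hS : S ⊆ M) :
    w (A ∪ S) - w A ≤ ∑ b ∈ S, (w (insert b A) - w A) := by
  induction S using Finset.induction_on with
  | empty => simp
  | insert a S ha ih =>
    rw [sum_insert ha]
    have hSM : S ⊆ M := (subset_insert a S).trans hS
    have haM : a ∈ M := hS (mem_insert_self a S)
    have h1 := ih hSM
    have h2 := h.submod (A ∪ S) (insert a A) (union_subset hA hSM) (insert_subset haM hA)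
    have h3 : A ∪ S ∪ insert a A = A ∪ insert a S := by grind
    have h4 := h.mono A ((A ∪ S) ∩ insert a A) (by grind) (by grind)
    rw [h3] at h2
    linarith

lemma sum_loss_le_aux (h : IsValuation w M) {S : Finset ι} (hS : S ⊆ M) (T : Finset ι)
    (hT : T ⊆ S) : ∑ b ∈ T, (w S - w (S.erase b)) ≤ w S - w (S \ T) := by
  induction T using Finset.induction_on with
  | empty => simp
  | insert a T ha ih =>
    rw [sum_insert ha]
    have h1 := ih ((subset_insert a T).trans hT)
    have haS : a ∈ S := hT (mem_insert_self a T)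
    have h2 := h.submod (S \ T) (S.erase a) (sdiff_subset.trans hS) ((erase_subset _ _).trans hS)
    have h3 : S \ T ∪ S.erase a = S := by grind
    have h4 : S \ T ∩ S.erase a = S \ insert a T := by grind
    rw [h3, h4] at h2
    linarith

/-- The marginal losses from removing single items of `S` add up to at most the value of `S`. -/
lemma sum_loss_le (h : IsValuation w M) {S : Finset ι} (hS : S ⊆ M) :
    ∑ b ∈ S, (w S - w (S.erase b)) ≤ w S := by
  simpa [h.empty] using h.sum_loss_le_aux hS S subset_rfl

end IsValuation

/-- `w` has at least `m` pairwise disjoint bundles in `M`, each of value at least `3`. The bundles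
are those indexed by `K`; a family indexed by all of `Fin n` is kept so that bundles can be dropped
by shrinking `K`. They need not cover `M`. -/
def HasBundles {ι : Type*} [DecidableEq ι] (n m : ℕ) (w : Finset ι → ℝ) (M : Finset ι) : Prop :=
  ∃ (K : Finset (Fin n)) (B : Fin n → Finset ι), m ≤ #K ∧
    (∀ j k, j ≠ k → Disjoint (B j) (B k)) ∧ ∀ j ∈ K, B j ⊆ M ∧ 3 ≤ w (B j)

/-- Removing one item destroys at most one bundle. -/
lemma HasBundles.erase {ι : Type*} [DecidableEq ι] {n m : ℕ} {w : Finset ι → ℝ} {M : Finset ι}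
    (h : HasBundles n (m + 1) w M) (b : ι) : HasBundles n m w (M.erase b) := by
  obtain ⟨K, B, hK, hd, hB⟩ := h
  by_cases hb : ∃ j, b ∈ B j
  · obtain ⟨j, hj⟩ := hb
    refine ⟨K.erase j, B, ?_, hd, fun k hk => ?_⟩
    · have := pred_card_le_card_erase (s := K) (a := j)
      omega
    · obtain ⟨hkj, hkK⟩ := mem_erase.1 hk
      refine ⟨fun x hx => mem_erase.2 ⟨?_, (hB k hkK).1 hx⟩, (hB k hkK).2⟩
      rintro rfl
      exact disjoint_left.1 (hd k j hkj) hx hj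
  · push Not at hb
    refine ⟨K, B, by omega, hd, fun k hk => ⟨fun x hx => mem_erase.2 ⟨?_, (hB k hk).1 hx⟩,
      (hB k hk).2⟩⟩
    rintro rfl
    exact hb k hx

/-- The local-search step: when every item is worth less than `1` to every agent, an assignment
maximizing the welfare truncated at `2` gives every agent in `N` a value of at least `1`. -/
lemma exists_alloc_of_small {ι : Type*} [DecidableEq ι] {n : ℕ} (w : Fin n → Finset ι → ℝ)
    (N : Finset (Fin n)) (hN : N.Nonempty) (M : Finset ι)
    (hw : ∀ i ∈ N, IsValuation (w i) M) (hB : ∀ i ∈ N, HasBundles n #N (w i) M)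
    (hsmall : ∀ i ∈ N, ∀ b ∈ M, w i {b} < 1) :
    ∃ A : Fin n → Finset ι, (∀ i, A i ⊆ M) ∧ (∀ i j, i ≠ j → Disjoint (A i) (A j)) ∧
      ∀ i ∈ N, 1 ≤ w i (A i) := by
  let u : Fin n → Finset ι → ℝ := fun k S => min (w k S) 2
  -- An assignment of items to agents, and the allocation it induces on `M`.
  let G : (ι → Fin n) → Fin n → Finset ι := fun f k => M.filter (f · = k)
  let Φ : (Fin n → Finset ι) → ℝ := fun A => ∑ k ∈ N, u k (A k)
  have hGM : ∀ f k, G f k ⊆ M := fun f k => filter_subset _ _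
  have hfin : (Set.range G).Finite := by
    refine (Set.Finite.pi (t := fun _ : Fin n => (M.powerset : Set (Finset ι)))
      (fun _ => M.powerset.finite_toSet)).subset ?_
    rintro _ ⟨f, rfl⟩ k -
    simpa using hGM f k
  obtain ⟨i₀, -⟩ := hN
  obtain ⟨_, ⟨f, rfl⟩, hmax⟩ := Set.exists_max_image (Set.range G) Φ hfin ⟨_, fun _ => i₀, rfl⟩
  refine ⟨G f, hGM f, fun i j hij => ?_, fun i hi => ?_⟩
  · rw [disjoint_left]
    intro x hx hx'
    exact hij ((mem_filter.1 hx).2.symm.trans (mem_filter.1 hx').2)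
  by_contra! hlt
  set A := G f with hA
  have hu : ∀ k ∈ N, IsValuation (u k) M := fun k hk => (hw k hk).truncate (by norm_num)
  have hcap : ∀ b ∈ M, w i (insert b (A i)) < 2 := by
    intro b hb
    have h1 := (hw i hi).submod (A i) {b} (hGM f i) (by simpa using hb)
    have h2 := (hw i hi).mono ∅ (A i ∩ {b}) (by simp) (inter_subset_left.trans (hGM f i))
    have h3 := hsmall i hi b hb
    have h4 : A i ∪ {b} = insert b (A i) := by grind
    rw [h4] at h1
    rw [(hw i hi).empty] at h2
    linarith
  have hAi : u i (A i) = w i (A i) := min_eq_left (by linarith)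
  -- Maximality: moving `b` to `i` gains at most what its present owner loses. The sum has at
  -- most one nonzero term, and none if `b` is already held by `i` or by an agent outside `N`.
  have hmove : ∀ b ∈ M, w i (insert b (A i)) - w i (A i) ≤
      ∑ k ∈ N.erase i, if f b = k then u k (A k) - u k ((A k).erase b) else 0 := by
    intro b hb
    have h1 := hmax _ ⟨Function.update f b i, rfl⟩
    simp only [Φ] at h1
    rw [← add_sum_erase N _ hi, ← add_sum_erase N _ hi] at h1
    have h2 : G (Function.update f b i) i = insert b (A i) := by
      ext x
      simp only [hA, G, mem_filter, mem_insert, Function.update_apply]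
      by_cases hx : x = b <;> simp [hx, hb]
    have h3 : ∀ k ∈ N.erase i, u k (G (Function.update f b i) k) =
        u k (A k) - if f b = k then u k (A k) - u k ((A k).erase b) else 0 := by
      intro k hk
      have hki : i ≠ k := (ne_of_mem_erase hk).symm
      have h4 : G (Function.update f b i) k = (A k).erase b := by
        ext x
        simp only [hA, G, mem_filter, mem_erase, Function.update_apply]
        by_cases hx : x = b <;> simp [hx, hki]
      rw [h4]
      split_ifs with hfb
      · ring
      · rw [erase_eq_of_notMem (by simp [hA, G, hfb])]
        ring
    have h5 : u i (insert b (A i)) = w i (insert b (A i)) := min_eq_left (hcap b hb).le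
    rw [sum_congr rfl h3, sum_sub_distrib, h2, h5, hAi] at h1
    linarith
  have hloss : ∑ b ∈ M, ∑ k ∈ N.erase i,
      (if f b = k then u k (A k) - u k ((A k).erase b) else 0) ≤ (#(N.erase i) : ℝ) * 2 := by
    rw [sum_comm, ← nsmul_eq_mul]
    refine sum_le_card_nsmul _ _ _ fun k hk => ?_
    rw [← sum_filter]
    exact ((hu k (mem_of_mem_erase hk)).sum_loss_le (hGM f k)).trans (min_le_right _ _)
  obtain ⟨K, B, hK, hd, hBK⟩ := hB i hi
  have hgain : (#K : ℝ) * 2 ≤ ∑ b ∈ M, (w i (insert b (A i)) - w i (A i)) := by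
    calc (#K : ℝ) * 2 ≤ ∑ j ∈ K, ∑ b ∈ B j, (w i (insert b (A i)) - w i (A i)) := by
          rw [← nsmul_eq_mul]
          refine card_nsmul_le_sum _ _ _ fun j hj => ?_
          have h1 := (hw i hi).gain_le_sum (hGM f i) (B j) (hBK j hj).1
          have h2 := (hw i hi).mono (B j) (A i ∪ B j) subset_union_right
            (union_subset (hGM f i) (hBK j hj).1)
          have h3 := (hBK j hj).2
          change w i (A i ∪ B j) - w i (A i) ≤ _ at h1
          linarith
      _ = ∑ b ∈ K.biUnion B, (w i (insert b (A i)) - w i (A i)) :=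
          (sum_biUnion fun j _ k _ hjk => hd j k hjk).symm
      _ ≤ _ := by
          refine sum_le_sum_of_subset_of_nonneg
            (biUnion_subset.2 fun j hj => (hBK j hj).1) fun b hb _ => ?_
          exact sub_nonneg.2 ((hw i hi).mono _ _ (subset_insert _ _) (insert_subset hb (hGM f i)))
  have hcard : (#(N.erase i) : ℝ) + 1 ≤ #K := by
    exact_mod_cast (card_erase_add_one hi).trans_le hK
  have := sum_le_sum hmove
  linarith

/-- Items of value at least `1` to some agent are handed out one at a time, until
`exists_alloc_of_small` applies. -/
lemma exists_alloc {ι : Type*} [DecidableEq ι] {n : ℕ} (w : Fin n → Finset ι → ℝ) (m : ℕ) :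
    ∀ (N : Finset (Fin n)) (M : Finset ι), #N = m → (∀ i ∈ N, IsValuation (w i) M) →
      (∀ i ∈ N, HasBundles n #N (w i) M) →
      ∃ A : Fin n → Finset ι, (∀ i, A i ⊆ M) ∧ (∀ i j, i ≠ j → Disjoint (A i) (A j)) ∧
        ∀ i ∈ N, 1 ≤ w i (A i) := by
  induction m with
  | zero =>
    intro N M hN _ _
    refine ⟨fun _ => ∅, by simp, by simp, ?_⟩
    simp [card_eq_zero.1 hN]
  | succ m ih =>
    intro N M hN hw hB
    by_cases hsmall : ∀ i ∈ N, ∀ b ∈ M, w i {b} < 1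
    · exact exists_alloc_of_small w N (card_pos.1 (by omega)) M hw hB hsmall
    push Not at hsmall
    obtain ⟨i, hi, b, hb, hib⟩ := hsmall
    have hcard : #(N.erase i) = m := by rw [card_erase_of_mem hi]; omega
    obtain ⟨A, hAM, hAd, hA⟩ := ih (N.erase i) (M.erase b) hcard
      (fun k hk => (hw k (mem_of_mem_erase hk)).subset (erase_subset _ _))
      (fun k hk => by
        have := hB k (mem_of_mem_erase hk)
        rw [hN] at this
        rw [hcard]
        exact this.erase b)
    have hbA : ∀ k, b ∉ A k := fun k hk => by simpa using hAM k hk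
    refine ⟨Function.update A i {b}, fun k => ?_, fun j k hjk => ?_, fun k hk => ?_⟩
    · by_cases hk : k = i
      · subst hk; simpa using hb
      · simpa [hk] using (hAM k).trans (erase_subset _ _)
    · by_cases hj : j = i
      · subst hj
        simpa [Function.update_apply, Ne.symm hjk] using hbA k
      · by_cases hk : k = i
        · subst hk
          simpa [Function.update_apply, hj] using hbA j
        · simpa [hj, hk] using hAd j k hjk
    · by_cases hki : k = i
      · subst hki; simpa using hib
      · simpa [hki] using hA k (mem_erase.2 ⟨hki, hk⟩)

/-- A positive maximin share is attained: there are only finitely many partitions. -/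
lemma exists_partition_of_MMS_pos {ι : Type*} [DecidableEq ι] {n : ℕ} {v : Finset ι → ℝ}
    {M : Finset ι} (hpos : 0 < MMS n v M) :
    ∃ B : Fin n → Finset ι, (∀ i j, i ≠ j → Disjoint (B i) (B j)) ∧ (∀ i, B i ⊆ M) ∧
      ∀ i, MMS n v M ≤ v (B i) := by
  set Z : Set ℝ := {z : ℝ | ∃ B : Fin n → Finset ι,
    (∀ i j, i ≠ j → Disjoint (B i) (B j)) ∧ (Finset.univ.biUnion B = M) ∧ z = ⨅ i, v (B i)}
    with hZ
  have hM : MMS n v M = sSup Z := rfl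
  have hne : Z.Nonempty := by
    by_contra hne
    rw [Set.not_nonempty_iff_eq_empty] at hne
    rw [hM, hne, Real.sSup_empty] at hpos
    exact lt_irrefl _ hpos
  have hfin : Z.Finite := by
    refine (((Set.Finite.pi (t := fun _ : Fin n => (M.powerset : Set (Finset ι)))
      (fun _ => M.powerset.finite_toSet))).image (fun B => ⨅ i, v (B i))).subset ?_
    rintro _ ⟨B, -, rfl, rfl⟩
    refine ⟨B, fun k _ => ?_, rfl⟩
    exact mem_coe.2 (mem_powerset.2 (subset_biUnion_of_mem B (mem_univ k)))
  obtain ⟨B, hd, hU, hz⟩ := hne.csSup_mem hfin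
  refine ⟨B, hd, fun i => hU ▸ subset_biUnion_of_mem B (mem_univ i), fun i => ?_⟩
  rw [hM, hz]
  exact ciInf_le (Set.finite_range _).bddBelow i

theorem submodular_equal_entitlements_MMS_one_third
    {ι : Type*} [DecidableEq ι] (M : Finset ι) (n : ℕ) (hn : 1 ≤ n)
    (v : Fin n → Finset ι → ℝ)
    (hnorm : ∀ i, v i ∅ = 0)
    (hnonneg : ∀ i, ∀ S ⊆ M, 0 ≤ v i S)
    (hmono : ∀ i, ∀ S T : Finset ι, S ⊆ T → T ⊆ M → v i S ≤ v i T)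
    (hsubmod : ∀ i, ∀ S T : Finset ι, S ⊆ M → T ⊆ M →
      v i (S ∪ T) + v i (S ∩ T) ≤ v i S + v i T) :
    ∃ A : Fin n → Finset ι,
      (∀ i, A i ⊆ M) ∧
      (∀ i j, i ≠ j → Disjoint (A i) (A j)) ∧
      (∀ i, ((1 : ℝ) / 3) * MMS n (v i) M ≤ v i (A i)) := by
  -- Agents with nonpositive maximin share are content with any bundle.
  let N : Finset (Fin n) := univ.filter fun i => 0 < MMS n (v i) M
  let w : Fin n → Finset ι → ℝ := fun i S => 3 / MMS n (v i) M * v i S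
  have hposN : ∀ i ∈ N, 0 < MMS n (v i) M := fun i hi => (mem_filter.1 hi).2
  have hw : ∀ i ∈ N, IsValuation (w i) M := by
    intro i hi
    have hc : 0 ≤ 3 / MMS n (v i) M := (div_pos (by norm_num) (hposN i hi)).le
    refine ⟨by simp [w, hnorm], fun S T hS hT => ?_, fun S T hS hT => ?_⟩
    · exact mul_le_mul_of_nonneg_left (hmono i S T hS hT) hc
    · have := mul_le_mul_of_nonneg_left (hsubmod i S T hS hT) hc
      simpa only [w, mul_add] using this
  have hB : ∀ i ∈ N, HasBundles n #N (w i) M := by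
    intro i hi
    obtain ⟨B, hd, hBM, hv⟩ := exists_partition_of_MMS_pos (hposN i hi)
    refine ⟨univ, B, card_le_univ N, hd, fun j _ => ⟨hBM j, ?_⟩⟩
    have hp := hposN i hi
    calc (3 : ℝ) = 3 / MMS n (v i) M * MMS n (v i) M := (div_mul_cancel₀ _ hp.ne').symm
      _ ≤ _ := mul_le_mul_of_nonneg_left (hv j) (by positivity)
  obtain ⟨A, hAM, hAd, hA⟩ := exists_alloc w #N N M rfl hw hB
  refine ⟨A, hAM, hAd, fun i => ?_⟩
  by_cases hi : 0 < MMS n (v i) M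
  · have h := hA i (mem_filter.2 ⟨mem_univ i, hi⟩)
    simp only [w] at h
    rw [div_mul_eq_mul_div, le_div_iff₀ hi] at h
    linarith
  · have := hnonneg i (A i) (hAM i)
    linarith
end

section
/- Let M be a finite set of items and let n ≥ 1 agents with equal entitlements have normalized monotone submodular valuations v_1, …, v_n : 2^M → ℝ≥0. Then there exists an allocation (A_1, …, A_n) of pairwise disjoint subsets of M such that for every agent i, v_i(A_i) ≥ (4/11) · MMS_n(v_i, M). -/
/-!
Scale every valuation so that the maximin share is `1`, and run a greedy procedure: as long as some
agent has value below `4/11` and some item is free, choose such an agent and a free item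
maximizing the marginal value `y` of the item to the agent, hand the item over, and charge
`price y`, where `price y = min (11/6 * y) (1/2)` for `y < 4/11` and `price y = 1` otherwise.

*No agent ever pays more than `1`.* The marginals an agent buys at are decreasing. Let `x` be the
value of her first item and `y` that of her last one. If she buys at most two items she pays at
most `1/2 + 1/2` (or `1` for a single item of value at least `4/11`). Otherwise she pays at most
`11/6 * (a + y)`, where `a < 4/11` is her value before the last purchase; here `y ≤ x` and
`y ≤ a - x`, hence `y ≤ 2/11` and the payment is at most `1`. These facts are carried along as
`GreedyInv.state`.

*If all items are allocated, every agent has value at least `4/11`.* Suppose agent `i` holds `S` with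
`v S < 4/11`. By the greedy choice and submodularity each item `e` outside `S` was sold for at
least `price (v (e | S))`. In a bundle `B` of her maximin partition the marginals over `S` sum to
at least `7/11`. If a marginal is at least `4/11`, or two items cost at least `1/2`, then `B` was sold
for at least `1`; if all prices are linear, it was sold for `11/6 * 7/11 ≥ 1`; and if exactly one item
was sold at `1/2`, the others have marginals summing to at least `3/11` and bring another `1/2`
(`one_le_sum_price`). So the other `n - 1` agents paid at least `n`, which exceeds their budgets
(`GreedyInv.satisfied`).
-/

open Finset

/-- The price charged for an item of marginal value `y`. -/
noncomputable def price (y : ℝ) : ℝ := if y < 4 / 11 then min (11 / 6 * y) (1 / 2) else 1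

lemma price_mono : Monotone price := by
  intro a b hab
  unfold price
  split_ifs with h1 h2
  · exact min_le_min (by linarith) le_rfl
  · exact (min_le_right _ _).trans (by norm_num)
  · linarith
  · exact le_rfl

lemma price_nonneg {y : ℝ} (hy : 0 ≤ y) : 0 ≤ price y := by
  unfold price
  split_ifs
  · exact le_min (by linarith) (by norm_num)
  · norm_num

lemma price_le_one (y : ℝ) : price y ≤ 1 := by
  unfold price
  split_ifs
  · exact (min_le_right _ _).trans (by norm_num)
  · norm_num

lemma price_le_half {y : ℝ} (hy : y < 4 / 11) : price y ≤ 1 / 2 := by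
  unfold price
  rw [if_pos hy]
  exact min_le_right _ _

lemma price_le_linear {y : ℝ} (hy : y < 4 / 11) : price y ≤ 11 / 6 * y := by
  unfold price
  rw [if_pos hy]
  exact min_le_left _ _

lemma price_cases (y : ℝ) :
    price y = 1 ∨ (y < 4 / 11 ∧ price y = 1 / 2) ∨ price y = 11 / 6 * y := by
  unfold price
  split_ifs with h
  · rcases min_choice (11 / 6 * y) (1 / 2 : ℝ) with h' | h'
    · exact Or.inr (Or.inr h')
    · exact Or.inr (Or.inl ⟨h, h'⟩)
  · exact Or.inl rfl

lemma one_le_sum_price {ι : Type*} [DecidableEq ι] (C : Finset ι) (m : ι → ℝ)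
    (hm : ∀ e ∈ C, 0 ≤ m e) (hsum : 7 / 11 ≤ ∑ e ∈ C, m e) :
    1 ≤ ∑ e ∈ C, price (m e) := by
  have hp : ∀ e ∈ C, 0 ≤ price (m e) := fun e he => price_nonneg (hm e he)
  by_cases h1 : ∃ e ∈ C, price (m e) = 1
  · obtain ⟨e, he, h⟩ := h1
    rw [← h]
    exact single_le_sum (f := fun e => price (m e)) hp he
  push Not at h1
  by_cases h2 : ∃ e ∈ C, m e < 4 / 11 ∧ price (m e) = 1 / 2
  · obtain ⟨e, he, hlt, heq⟩ := h2
    rw [← add_sum_erase _ _ he] at hsum ⊢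
    by_cases h3 : ∃ f ∈ C.erase e, price (m f) = 1 / 2
    · obtain ⟨f, hf, hfeq⟩ := h3
      have := single_le_sum (f := fun e => price (m e))
        (fun a ha => hp a (mem_of_mem_erase ha)) hf
      linarith
    · push Not at h3
      have : ∑ x ∈ C.erase e, price (m x) = ∑ x ∈ C.erase e, 11 / 6 * m x := by
        refine sum_congr rfl fun f hf => ?_
        rcases price_cases (m f) with h | h | h
        · exact absurd h (h1 f (mem_of_mem_erase hf))
        · exact absurd h.2 (h3 f hf)
        · exact h
      rw [this, ← mul_sum]
      linarith
  · push Not at h2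
    have : ∑ x ∈ C, price (m x) = ∑ x ∈ C, 11 / 6 * m x := by
      refine sum_congr rfl fun f hf => ?_
      rcases price_cases (m f) with h | h | h
      · exact absurd h (h1 f hf)
      · exact absurd h.2 (h2 f hf h.1)
      · exact h
    rw [this, ← mul_sum]
    linarith

/-- The marginal value of `e` over `S`; it is `0` (not the loss of removing `e`) when `e ∈ S`. -/
def marginal {ι : Type*} [DecidableEq ι] (w : Finset ι → ℝ) (S : Finset ι) (e : ι) : ℝ :=
  w (insert e S) - w S

/-- A normalized monotone submodular valuation of the subsets of `M`. -/
structure SubmodularOn {ι : Type*} [DecidableEq ι] (M : Finset ι) (w : Finset ι → ℝ) : Prop where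
  norm : w ∅ = 0
  mono : ∀ S T : Finset ι, S ⊆ T → T ⊆ M → w S ≤ w T
  submod : ∀ S T : Finset ι, S ⊆ M → T ⊆ M → w (S ∪ T) + w (S ∩ T) ≤ w S + w T

namespace SubmodularOn

variable {ι : Type*} [DecidableEq ι] {M : Finset ι} {w : Finset ι → ℝ}

lemma marginal_nonneg (hw : SubmodularOn M w) {S : Finset ι} {e : ι} (hS : S ⊆ M) (he : e ∈ M) :
    0 ≤ marginal w S e :=
  sub_nonneg.2 (hw.mono _ _ (subset_insert _ _) (insert_subset he hS))

lemma marginal_anti (hw : SubmodularOn M w) {S T : Finset ι} {e : ι} (hST : S ⊆ T) (hT : T ⊆ M)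
    (he : e ∈ M) : marginal w T e ≤ marginal w S e := by
  by_cases heT : e ∈ T
  · have : marginal w T e = 0 := by simp [marginal, heT]
    rw [this]
    exact hw.marginal_nonneg (hST.trans hT) he
  · have h := hw.submod (insert e S) T (insert_subset he (hST.trans hT)) hT
    have h1 : insert e S ∪ T = insert e T := by
      rw [insert_union, union_eq_right.2 hST]
    have h2 : insert e S ∩ T = S := by
      rw [insert_inter_of_notMem heT, inter_eq_left.2 hST]
    rw [h1, h2] at h
    unfold marginal
    linarith

lemma union_le (hw : SubmodularOn M w) {S : Finset ι} (hS : S ⊆ M) (C : Finset ι) (hC : C ⊆ M) :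
    w (S ∪ C) - w S ≤ ∑ e ∈ C, marginal w S e := by
  induction C using Finset.induction_on with
  | empty => simp
  | insert a C ha ih =>
    have haM : a ∈ M := hC (mem_insert_self _ _)
    have hCM : C ⊆ M := (subset_insert _ _).trans hC
    have h1 := ih hCM
    have h2 := hw.marginal_anti (S := S) (T := S ∪ C) subset_union_left (union_subset hS hCM) haM
    rw [sum_insert ha, union_insert]
    have h3 : marginal w (S ∪ C) a = w (insert a (S ∪ C)) - w (S ∪ C) := rfl
    linarith

lemma sum_marginal_ge (hw : SubmodularOn M w) {S B : Finset ι} (hS : S ⊆ M) (hB : B ⊆ M)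
    (hlt : w S < 4 / 11) (hone : 1 ≤ w B) : 7 / 11 ≤ ∑ e ∈ B \ S, marginal w S e := by
  have h1 := hw.union_le hS (B \ S) (sdiff_subset.trans hB)
  rw [union_sdiff_self_eq_union] at h1
  have h2 := hw.mono B (S ∪ B) subset_union_right (union_subset hS hB)
  linarith

end SubmodularOn

/-- The invariant of the greedy procedure: `A` is the current allocation and `p e` the price at which
the item `e` was sold. Only the agents satisfying `P` (those with a positive maximin share) take
part. -/
structure GreedyInv {ι : Type*} [DecidableEq ι] {n : ℕ} (M : Finset ι)
    (w : Fin n → Finset ι → ℝ) (P : Fin n → Prop) (A : Fin n → Finset ι) (p : ι → ℝ) : Prop where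
  sub : ∀ i, A i ⊆ M
  disj : ∀ i j, i ≠ j → Disjoint (A i) (A j)
  nonneg : ∀ e, 0 ≤ p e
  /-- From the point of view of an unsatisfied agent, no sold item was too cheap. -/
  paid : ∀ i, P i → w i (A i) < 4 / 11 → ∀ e ∈ univ.biUnion A, e ∉ A i →
    price (marginal (w i) (A i) e) ≤ p e
  budget : ∀ i, ∑ e ∈ A i, p e ≤ 1
  /-- An unsatisfied agent has bought nothing, or `x` is the value of her first item: then the
  remaining marginals are at most `x`, and, once she has bought a second item, also at most the value
  `w i (A i) - x` of what she bought after the first one. -/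
  state : ∀ i, P i → w i (A i) < 4 / 11 → A i = ∅ ∨ ∃ x, x ≤ w i (A i) ∧
    ∑ e ∈ A i, p e ≤ price x + 11 / 6 * (w i (A i) - x) ∧
    ∀ e ∈ M, e ∉ univ.biUnion A → marginal (w i) (A i) e ≤ x ∧
      (w i (A i) = x ∨ marginal (w i) (A i) e ≤ w i (A i) - x)

namespace GreedyInv

variable {ι : Type*} [DecidableEq ι] {n : ℕ} {M : Finset ι}
  {w : Fin n → Finset ι → ℝ} {P : Fin n → Prop} {A : Fin n → Finset ι} {p : ι → ℝ}

lemma empty_start : GreedyInv M w P (fun _ => ∅) (fun _ => 0) where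
  sub i := empty_subset _
  disj i j _ := disjoint_empty_left _
  nonneg e := le_rfl
  paid i _ _ e he := by simp at he
  budget i := by simp
  state i _ _ := Or.inl rfl

lemma satisfied (hI : GreedyInv M w P A p) (hw : ∀ i, SubmodularOn M (w i))
    (hB : ∀ i, P i → ∃ B : Fin n → Finset ι, (∀ j k, j ≠ k → Disjoint (B j) (B k)) ∧
      univ.biUnion B = M ∧ ∀ j, 1 ≤ w i (B j))
    (hall : univ.biUnion A = M) (i : Fin n) (hi : P i) : 4 / 11 ≤ w i (A i) := by
  by_contra hlt
  push Not at hlt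
  obtain ⟨B, hBd, hBM, hB1⟩ := hB i hi
  have hBsub : ∀ j, B j ⊆ M := fun j => by
    rw [← hBM]; exact subset_biUnion_of_mem B (mem_univ j)
  have hbundle : ∀ j, 1 ≤ ∑ e ∈ B j \ A i, p e := fun j => by
    refine (one_le_sum_price (B j \ A i) (marginal (w i) (A i)) ?_
      ((hw i).sum_marginal_ge (hI.sub i) (hBsub j) hlt (hB1 j))).trans (sum_le_sum ?_)
    · intro e he
      exact (hw i).marginal_nonneg (hI.sub i) (hBsub j (mem_sdiff.1 he).1)
    · intro e he
      obtain ⟨he1, he2⟩ := mem_sdiff.1 he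
      exact hI.paid i hi hlt e (hall ▸ hBsub j he1) he2
  have h1 : ∑ e ∈ M \ A i, p e = ∑ j, ∑ e ∈ B j \ A i, p e := by
    rw [← sum_biUnion]
    · congr 1
      rw [← hBM]
      ext e
      simp
    · intro j _ k _ hjk
      exact (hBd j k hjk).mono sdiff_subset sdiff_subset
  have h2 : ∑ e ∈ M, p e = ∑ j, ∑ e ∈ A j, p e := by
    rw [← hall, sum_biUnion]
    intro j _ k _ hjk
    exact hI.disj j k hjk
  have h3 := sum_sdiff (f := p) (hI.sub i)
  have h4 : (n : ℝ) ≤ ∑ j, ∑ e ∈ B j \ A i, p e := by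
    have := card_nsmul_le_sum univ (fun j => ∑ e ∈ B j \ A i, p e) 1 (fun j _ => hbundle j)
    simpa using this
  rw [← add_sum_erase univ _ (mem_univ i)] at h2
  have h5 : ∑ j ∈ univ.erase i, ∑ e ∈ A j, p e ≤ (n : ℝ) - 1 := by
    have := sum_le_card_nsmul (univ.erase i) (fun j => ∑ e ∈ A j, p e) 1
      (fun j _ => hI.budget j)
    rw [card_erase_of_mem (mem_univ i), card_univ, Fintype.card_fin, nsmul_eq_mul, mul_one,
      Nat.cast_sub (by have := i.isLt; omega), Nat.cast_one] at this
    exact this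
  linarith

/-- An unsatisfied agent can afford any remaining item. -/
lemma afford (hI : GreedyInv M w P A p) (hw : ∀ i, SubmodularOn M (w i)) {i : Fin n} (hi : P i)
    (hlt : w i (A i) < 4 / 11) {e : ι} (he : e ∈ M) (hfree : e ∉ univ.biUnion A) :
    ∑ f ∈ A i, p f + price (marginal (w i) (A i) e) ≤ 1 := by
  have hy := (hw i).marginal_nonneg (hI.sub i) he
  rcases hI.state i hi hlt with h0 | ⟨x, hx, hs, hm⟩
  · rw [h0, sum_empty, zero_add]
    exact price_le_one _
  · obtain ⟨h1, h2⟩ := hm e he hfree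
    rcases h2 with h2 | h2
    · have := price_le_half (h1.trans_lt (hx.trans_lt hlt))
      have := price_le_half (hx.trans_lt hlt)
      rw [h2, sub_self] at hs
      linarith
    · have := price_le_linear (h1.trans_lt (hx.trans_lt hlt))
      have := price_le_linear (hx.trans_lt hlt)
      linarith

lemma step (hI : GreedyInv M w P A p) (hw : ∀ i, SubmodularOn M (w i))
    (hu : ∃ i, P i ∧ w i (A i) < 4 / 11) (hf : ∃ e ∈ M, e ∉ univ.biUnion A) :
    ∃ A' p', GreedyInv M w P A' p' ∧
      (M \ univ.biUnion A').card < (M \ univ.biUnion A).card := by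
  classical
  obtain ⟨i₀, hi₀⟩ := hu
  obtain ⟨e₀, he₀, hfe₀⟩ := hf
  obtain ⟨⟨k, e⟩, hke, hmax⟩ := exists_max_image
    ((univ.filter fun i => P i ∧ w i (A i) < 4 / 11) ×ˢ (M \ univ.biUnion A))
    (fun q => marginal (w q.1) (A q.1) q.2)
    ⟨(i₀, e₀), by simp only [mem_product, mem_filter, mem_univ, true_and, mem_sdiff]; tauto⟩
  simp only [mem_product, mem_filter, mem_univ, true_and, mem_sdiff] at hke
  obtain ⟨⟨hPk, hk⟩, heM, hefree⟩ := hke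
  have hmax' : ∀ i f, P i → w i (A i) < 4 / 11 → f ∈ M → f ∉ univ.biUnion A →
      marginal (w i) (A i) f ≤ marginal (w k) (A k) e := by
    intro i f h1 h2 h3 h4
    exact hmax (i, f) (by simp only [mem_product, mem_filter, mem_univ, true_and, mem_sdiff]; tauto)
  have heA : ∀ i, e ∉ A i := fun i h => hefree (mem_biUnion.2 ⟨i, mem_univ i, h⟩)
  set y := marginal (w k) (A k) e with hy
  have hy0 : 0 ≤ y := (hw k).marginal_nonneg (hI.sub k) heM
  set A' : Fin n → Finset ι := Function.update A k (insert e (A k)) with hA'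
  set p' : ι → ℝ := Function.update p e (price y) with hp'
  have hAk : A' k = insert e (A k) := by simp [hA']
  have hAi : ∀ i, i ≠ k → A' i = A i := fun i hik => by simp [hA', hik]
  have hpe : p' e = price y := by simp [hp']
  have hpf : ∀ f, f ≠ e → p' f = p f := fun f hfe => by simp [hp', hfe]
  have hU : ∀ f, f ∈ univ.biUnion A' ↔ f = e ∨ f ∈ univ.biUnion A := by
    intro f
    simp only [mem_biUnion, mem_univ, true_and]
    constructor
    · rintro ⟨i, hi⟩
      by_cases hik : i = k
      · subst hik
        rw [hAk, mem_insert] at hi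
        exact hi.imp_right fun h => ⟨i, h⟩
      · rw [hAi i hik] at hi
        exact Or.inr ⟨i, hi⟩
    · rintro (rfl | ⟨i, hi⟩)
      · exact ⟨k, hAk ▸ mem_insert_self _ _⟩
      · by_cases hik : i = k
        · subst hik
          exact ⟨i, hAk ▸ mem_insert_of_mem hi⟩
        · exact ⟨i, (hAi i hik).symm ▸ hi⟩
  have hsum : ∀ i, ∑ f ∈ A i, p' f = ∑ f ∈ A i, p f := fun i =>
    sum_congr rfl fun f hf => hpf f fun h => heA i (h ▸ hf)
  have hsumk : ∑ f ∈ A' k, p' f = ∑ f ∈ A k, p f + price y := by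
    rw [hAk, sum_insert (heA k), hsum, hpe, add_comm]
  have hwk : w k (A' k) = w k (A k) + y := by rw [hAk, hy]; unfold marginal; ring
  have hsubk : A' k ⊆ M := by rw [hAk]; exact insert_subset heM (hI.sub k)
  have hanti : ∀ f ∈ M, marginal (w k) (A' k) f ≤ marginal (w k) (A k) f := fun f hf =>
    (hw k).marginal_anti (by rw [hAk]; exact subset_insert _ _) hsubk hf
  refine ⟨A', p', ⟨?_, ?_, ?_, ?_, ?_, ?_⟩, ?_⟩
  · intro i
    by_cases hik : i = k
    · subst hik; exact hsubk
    · rw [hAi i hik]; exact hI.sub i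
  · have key : ∀ j, j ≠ k → Disjoint (A' k) (A' j) := fun j hjk => by
      rw [hAk, hAi j hjk, disjoint_insert_left]
      exact ⟨heA j, hI.disj k j (Ne.symm hjk)⟩
    intro i j hij
    by_cases hik : i = k
    · subst hik; exact key j (Ne.symm hij)
    · by_cases hjk : j = k
      · subst hjk; exact (key i hik).symm
      · rw [hAi i hik, hAi j hjk]; exact hI.disj i j hij
  · intro f
    by_cases hfe : f = e
    · rw [hfe, hpe]; exact price_nonneg hy0
    · rw [hpf f hfe]; exact hI.nonneg f
  · intro i hPi hi f hf hfi
    rw [hU] at hf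
    by_cases hik : i = k
    · subst hik
      have hfe : f ≠ e := fun h => hfi (by rw [hAk, h]; exact mem_insert_self _ _)
      have hfU := hf.resolve_left hfe
      have hfM : f ∈ M := by
        obtain ⟨j, _, hj⟩ := mem_biUnion.1 hfU
        exact hI.sub j hj
      rw [hpf f hfe]
      refine (price_mono (hanti f hfM)).trans (hI.paid i hPi hk f hfU fun h => hfi ?_)
      rw [hAk]; exact mem_insert_of_mem h
    · rw [hAi i hik] at hi hfi ⊢
      by_cases hfe : f = e
      · rw [hfe, hpe]
        exact price_mono (hmax' i e hPi hi heM hefree)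
      · rw [hpf f hfe]
        exact hI.paid i hPi hi f (hf.resolve_left hfe) hfi
  · intro i
    by_cases hik : i = k
    · subst hik
      rw [hsumk]
      exact hI.afford hw hPk hk heM hefree
    · rw [hAi i hik, hsum]; exact hI.budget i
  · intro i hPi hi
    by_cases hik : i = k
    · subst hik
      right
      have hnew : ∀ f ∈ M, f ∉ univ.biUnion A' →
          marginal (w i) (A' i) f ≤ marginal (w i) (A i) f ∧
            marginal (w i) (A i) f ≤ y ∧ f ∉ univ.biUnion A := by
        intro f hf hfU
        rw [hU] at hfU
        push Not at hfU
        exact ⟨hanti f hf, hmax' i f hPi hk hf hfU.2, hfU.2⟩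
      rw [hwk] at hi
      rw [hwk, hsumk]
      rcases hI.state i hPi hk with h0 | ⟨x, hx, hs, hm⟩
      · have hw0 : w i (A i) = 0 := by rw [h0]; exact (hw i).norm
        refine ⟨y, by linarith, ?_, fun f hf hfU => ?_⟩
        · rw [h0, sum_empty, ← h0, hw0]; linarith
        · obtain ⟨h1, h2, -⟩ := hnew f hf hfU
          exact ⟨h1.trans h2, Or.inl (by rw [hw0, zero_add])⟩
      · obtain ⟨hyx, -⟩ := hm e heM hefree
        have hpy := price_le_linear (y := y) (by linarith)
        refine ⟨x, by linarith, by linarith, fun f hf hfU => ?_⟩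
        obtain ⟨h1, h2, h3⟩ := hnew f hf hfU
        -- From the second purchase on, `y` itself is a part of the value bought after the first item.
        exact ⟨by linarith, Or.inr (by linarith)⟩
    · rw [hAi i hik] at hi ⊢
      rcases hI.state i hPi hi with h0 | ⟨x, hx, hs, hm⟩
      · exact Or.inl h0
      · refine Or.inr ⟨x, hx, by rw [hsum]; exact hs, fun f hf hfU => hm f hf fun h => hfU ?_⟩
        exact (hU f).2 (Or.inr h)
  · refine card_lt_card ⟨fun f hf => ?_, fun h => ?_⟩
    · rw [mem_sdiff, hU] at hf
      rw [mem_sdiff]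
      tauto
    · have := h (mem_sdiff.2 ⟨heM, hefree⟩)
      rw [mem_sdiff, hU] at this
      tauto

end GreedyInv

/-- The theorem for valuations normalized so that the maximin share is at least `1`. Agents outside
`P` have no claim, but they count towards the number `n` of bundles. -/
lemma exists_allocation_of_one_le {ι : Type*} [DecidableEq ι] {n : ℕ} {M : Finset ι}
    {w : Fin n → Finset ι → ℝ} {P : Fin n → Prop} (hw : ∀ i, SubmodularOn M (w i))
    (hB : ∀ i, P i → ∃ B : Fin n → Finset ι, (∀ j k, j ≠ k → Disjoint (B j) (B k)) ∧
      univ.biUnion B = M ∧ ∀ j, 1 ≤ w i (B j)) :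
    ∃ A : Fin n → Finset ι, (∀ i, A i ⊆ M) ∧ (∀ i j, i ≠ j → Disjoint (A i) (A j)) ∧
      ∀ i, P i → 4 / 11 ≤ w i (A i) := by
  suffices h : ∀ (c : ℕ) (A : Fin n → Finset ι) (p : ι → ℝ), GreedyInv M w P A p →
      (M \ univ.biUnion A).card = c → ∃ A' p', GreedyInv M w P A' p' ∧
        ∀ i, P i → 4 / 11 ≤ w i (A' i) by
    obtain ⟨A, p, hI, hA⟩ := h _ _ _ (GreedyInv.empty_start) rfl
    exact ⟨A, hI.sub, hI.disj, hA⟩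
  intro c
  induction c using Nat.strong_induction_on with
  | _ c ih =>
    intro A p hI hc
    by_cases hu : ∃ i, P i ∧ w i (A i) < 4 / 11
    · by_cases hf : ∃ e ∈ M, e ∉ univ.biUnion A
      · obtain ⟨A', p', hI', hlt⟩ := hI.step hw hu hf
        exact ih _ (hc ▸ hlt) A' p' hI' rfl
      · push Not at hf
        have hall : univ.biUnion A = M :=
          Subset.antisymm (biUnion_subset.2 fun i _ => hI.sub i) hf
        exact ⟨A, p, hI, hI.satisfied hw hB hall⟩
    · push Not at hu
      exact ⟨A, p, hI, hu⟩

/-- The supremum defining the maximin share is attained. -/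
lemma exists_partition_MMS {ι : Type*} [DecidableEq ι] (M : Finset ι) (n : ℕ) (hn : 1 ≤ n)
    (v : Finset ι → ℝ) : ∃ B : Fin n → Finset ι, (∀ i j, i ≠ j → Disjoint (B i) (B j)) ∧
      univ.biUnion B = M ∧ ∀ j, MMS n v M ≤ v (B j) := by
  have hfin : {z : ℝ | ∃ B : Fin n → Finset ι, (∀ i j, i ≠ j → Disjoint (B i) (B j)) ∧
      univ.biUnion B = M ∧ z = ⨅ i, v (B i)}.Finite := by
    refine ((Set.Finite.pi' (ι := Fin n) fun _ => M.powerset.finite_toSet).image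
      fun B => ⨅ i, v (B i)).subset ?_
    rintro z ⟨B, -, hBM, rfl⟩
    refine ⟨B, fun i => ?_, rfl⟩
    rw [mem_coe, mem_powerset, ← hBM]
    exact subset_biUnion_of_mem B (mem_univ i)
  have hne : {z : ℝ | ∃ B : Fin n → Finset ι, (∀ i j, i ≠ j → Disjoint (B i) (B j)) ∧
      univ.biUnion B = M ∧ z = ⨅ i, v (B i)}.Nonempty := by
    refine ⟨_, fun i => if i = ⟨0, hn⟩ then M else ∅, fun i j hij => ?_, ?_, rfl⟩
    · by_cases hi : i = ⟨0, hn⟩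
      · have hj : j ≠ ⟨0, hn⟩ := fun h => hij (hi.trans h.symm)
        simp [hj]
      · simp [hi]
    · ext e
      simp only [mem_biUnion, mem_univ, true_and]
      constructor
      · rintro ⟨i, hi⟩
        split_ifs at hi with h
        · exact hi
        · simp at hi
      · intro he
        exact ⟨⟨0, hn⟩, by simpa using he⟩
  obtain ⟨B, hd, hM, hz⟩ := hne.csSup_mem hfin
  refine ⟨B, hd, hM, fun j => ?_⟩
  unfold MMS
  rw [hz]
  exact ciInf_le (Set.finite_range _).bddBelow j

theorem submodular_equal_entitlements_MMS_four_elevenths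
    {ι : Type*} [DecidableEq ι] (M : Finset ι) (n : ℕ) (hn : 1 ≤ n)
    (v : Fin n → Finset ι → ℝ)
    (hnorm : ∀ i, v i ∅ = 0)
    (hnonneg : ∀ i, ∀ S ⊆ M, 0 ≤ v i S)
    (hmono : ∀ i, ∀ S T : Finset ι, S ⊆ T → T ⊆ M → v i S ≤ v i T)
    (hsubmod : ∀ i, ∀ S T : Finset ι, S ⊆ M → T ⊆ M →
      v i (S ∪ T) + v i (S ∩ T) ≤ v i S + v i T) :
    ∃ A : Fin n → Finset ι,
      (∀ i, A i ⊆ M) ∧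
      (∀ i j, i ≠ j → Disjoint (A i) (A j)) ∧
      (∀ i, ((4 : ℝ) / 11) * MMS n (v i) M ≤ v i (A i)) := by
  -- Agents whose maximin share is not positive are content with any bundle.
  have hw : ∀ i, SubmodularOn M fun S => v i S / max (MMS n (v i) M) 0 := fun i => by
    have h0 : 0 ≤ max (MMS n (v i) M) 0 := le_max_right _ _
    refine ⟨by simp [hnorm], fun S T hST hT => ?_, fun S T hS hT => ?_⟩
    · exact div_le_div_of_nonneg_right (hmono i S T hST hT) h0
    · rw [← add_div, ← add_div]
      exact div_le_div_of_nonneg_right (hsubmod i S T hS hT) h0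
  obtain ⟨A, hsub, hdisj, hA⟩ := exists_allocation_of_one_le
    (P := fun i => 0 < MMS n (v i) M) hw (fun i hi => by
      obtain ⟨B, hd, hM, hB⟩ := exists_partition_MMS M n hn (v i)
      refine ⟨B, hd, hM, fun j => ?_⟩
      rw [max_eq_left hi.le, le_div_iff₀ hi, one_mul]
      exact hB j)
  refine ⟨A, hsub, hdisj, fun i => ?_⟩
  by_cases hi : 0 < MMS n (v i) M
  · have := hA i hi
    rwa [max_eq_left hi.le, le_div_iff₀ hi] at this
  · have := hnonneg i (A i) (hsub i)
    push Not at hi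
    linarith
end
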